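/- arXiv:2111.00371 — 2 statements merged into one kernel-verified Lean document; each statement's English description precedes it below -/
import Mathlib

section
/- Let (A, μ, α, β) be a BiHom-associative algebra with α, β bijective, and let ψ, ω : A → A be linear maps with ψ(ab) = ψ(a)ψ(b) and ω(ab) = ω(a)ω(b) such that any two of α, β, ψ, ω commute. Let r, s ∈ A⊗A be α-, β-, ψ-, and ω-invariant, and define δ_r(a) = α⁻¹(a)▷r − r◁β⁻¹(a), δ_s(a) = α⁻¹(a)▷s − s◁β⁻¹(a), and Δ(a) = α⁻¹(a)▷r − s◁β⁻¹(a). Then (A, μ, δ_r, δ_s, Δ, α, β, ψ, ω) is a covariant BiHom-bialgebra if and only if ωα⁻¹(a)▷(r₁₃r₁₂ − r₁₂r₂₃ + s₂₃r₁₃) = (s₁₃r₁₂ − s₁₂s₂₃ + s₂₃s₁₃)◁ψβ⁻¹(a) for all a ∈ A. -/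
/-! Write `Δ = L − R` with `L(a) = α⁻¹(a) ▷ r` and `R(a) = s ◁ β⁻¹(a)`. Compatibility with
`α, β, ψ, ω` and all the derivation identities follow from invariance and the bimodule laws of
`A ⊗ A`, so only coassociativity is at stake. There, `L` is left linear and `R` is right linear,
which pulls the outer action out of `(L ⊗ ψ) ∘ L` and `(ω ⊗ R) ∘ R`; the same happens in
`(Δ ⊗ ψ) ∘ R` and `(ω ⊗ Δ) ∘ L` because `Δ` commutes with `α` and `β`. What remains inside are
tensors such as `(L ⊗ ψ)(r) = r₁₃r₁₂` and `(ω ⊗ R)(s) = s₂₃s₁₃`, while the mixed terms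
`(R ⊗ ψ) ∘ L` and `(ω ⊗ L) ∘ R` cancel. -/

open TensorProduct

section Defs

variable {K A : Type*} [Field K] [NonUnitalNonAssocRing A] [Module K A]
  [SMulCommClass K A A] [IsScalarTower K A A]

/-- The left action of `A` on `A⊗A`: `a ▷ (x⊗y) = ω(a)x ⊗ β(y)`. -/
noncomputable def lT2 (β ω : A →ₗ[K] A) (a : A) : A ⊗[K] A →ₗ[K] A ⊗[K] A :=
  TensorProduct.map (LinearMap.mulLeft K (ω a)) β

/-- The right action of `A` on `A⊗A`: `(x⊗y) ◁ a = α(x) ⊗ yψ(a)`. -/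
noncomputable def rT2 (α ψ : A →ₗ[K] A) (a : A) : A ⊗[K] A →ₗ[K] A ⊗[K] A :=
  TensorProduct.map α (LinearMap.mulRight K (ψ a))

/-- The left action of `A` on `A⊗A⊗A`: `a ▷ (x⊗y⊗z) = ω(a)x ⊗ β(y) ⊗ β(z)`. -/
noncomputable def lT3 (β ω : A →ₗ[K] A) (a : A) :
    A ⊗[K] (A ⊗[K] A) →ₗ[K] A ⊗[K] (A ⊗[K] A) :=
  TensorProduct.map (LinearMap.mulLeft K (ω a)) (TensorProduct.map β β)

/-- The right action of `A` on `A⊗A⊗A`: `(x⊗y⊗z) ◁ a = α(x) ⊗ α(y) ⊗ zψ(a)`. -/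
noncomputable def rT3 (α ψ : A →ₗ[K] A) (a : A) :
    A ⊗[K] (A ⊗[K] A) →ₗ[K] A ⊗[K] (A ⊗[K] A) :=
  TensorProduct.map α (TensorProduct.map α (LinearMap.mulRight K (ψ a)))

/-- The left action, bundled as a linear map in the acting variable. -/
noncomputable def lT2hom (β ω : A →ₗ[K] A) : A →ₗ[K] (A ⊗[K] A →ₗ[K] A ⊗[K] A) :=
  TensorProduct.homTensorHomMap (RingHom.id K) A A A A ∘ₗ
    (TensorProduct.mk K (A →ₗ[K] A) (A →ₗ[K] A)).flip β ∘ₗ LinearMap.mul K A ∘ₗ ω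

/-- The right action, bundled as a linear map in the acting variable. -/
noncomputable def rT2hom (α ψ : A →ₗ[K] A) : A →ₗ[K] (A ⊗[K] A →ₗ[K] A ⊗[K] A) :=
  TensorProduct.homTensorHomMap (RingHom.id K) A A A A ∘ₗ
    TensorProduct.mk K (A →ₗ[K] A) (A →ₗ[K] A) α ∘ₗ (LinearMap.mul K A).flip ∘ₗ ψ

/-- `a ↦ α⁻¹(a) ▷ r − s ◁ β⁻¹(a)`, as a linear map `A → A⊗A`. -/
noncomputable def deltaOp (α β : A ≃ₗ[K] A) (ψ ω : A →ₗ[K] A) (r s : A ⊗[K] A) :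
    A →ₗ[K] A ⊗[K] A :=
  (lT2hom β.toLinearMap ω).flip r ∘ₗ α.symm.toLinearMap -
    (rT2hom α.toLinearMap ψ).flip s ∘ₗ β.symm.toLinearMap

/-- `r₁₂s₂₃ = α(r¹) ⊗ r²s¹ ⊗ β(s²)`, as a linear map on `(A⊗A)⊗(A⊗A)`. -/
noncomputable def m1223 (α β : A →ₗ[K] A) :
    (A ⊗[K] A) ⊗[K] (A ⊗[K] A) →ₗ[K] A ⊗[K] (A ⊗[K] A) :=
  TensorProduct.map α (TensorProduct.map (LinearMap.mul' K A) β) ∘ₗ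
    TensorProduct.map LinearMap.id (TensorProduct.assoc K A A A).symm.toLinearMap ∘ₗ
    (TensorProduct.assoc K A A (A ⊗[K] A)).toLinearMap

/-- `r₁₃s₁₂ = ω(r¹)s¹ ⊗ β(s²) ⊗ αψ(r²)`. -/
noncomputable def m1312 (α β ψ ω : A →ₗ[K] A) :
    (A ⊗[K] A) ⊗[K] (A ⊗[K] A) →ₗ[K] A ⊗[K] (A ⊗[K] A) :=
  TensorProduct.map (LinearMap.mul' K A ∘ₗ TensorProduct.map ω LinearMap.id)
      ((TensorProduct.comm K A A).toLinearMap ∘ₗ TensorProduct.map (α ∘ₗ ψ) β) ∘ₗ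
    (TensorProduct.tensorTensorTensorComm K A A A A).toLinearMap

/-- `r₂₃s₁₃ = βω(s¹) ⊗ α(r¹) ⊗ r²ψ(s²)`. -/
noncomputable def m2313 (α β ψ ω : A →ₗ[K] A) :
    (A ⊗[K] A) ⊗[K] (A ⊗[K] A) →ₗ[K] A ⊗[K] (A ⊗[K] A) :=
  (TensorProduct.assoc K A A A).toLinearMap ∘ₗ
    TensorProduct.map ((TensorProduct.comm K A A).toLinearMap ∘ₗ TensorProduct.map α (β ∘ₗ ω))
      (LinearMap.mul' K A ∘ₗ TensorProduct.map LinearMap.id ψ) ∘ₗ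
    (TensorProduct.tensorTensorTensorComm K A A A A).toLinearMap

end Defs

/-- The coalgebra-side axioms of a covariant BiHom-bialgebra
`(A, μ, δ₁, δ₂, Δ, α, β, ψ, ω)`: `Δ` is compatible with `α, β, ψ, ω` and
BiHom-coassociative, `δ₁, δ₂` are BiHom-derivations, and `Δ` is a covariant
BiHom-derivation with respect to `(δ₁, δ₂)`. -/
noncomputable def IsCovariantBiHomBialgebra {K A : Type*} [Field K]
    [NonUnitalNonAssocRing A] [Module K A] [SMulCommClass K A A] [IsScalarTower K A A]
    (α β ψ ω : A →ₗ[K] A) (δ₁ δ₂ Δ : A →ₗ[K] A ⊗[K] A) : Prop :=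
  (∀ a, TensorProduct.map ψ ψ (Δ a) = Δ (ψ a)) ∧
  (∀ a, TensorProduct.map ω ω (Δ a) = Δ (ω a)) ∧
  (∀ a, TensorProduct.map α α (Δ a) = Δ (α a)) ∧
  (∀ a, TensorProduct.map β β (Δ a) = Δ (β a)) ∧
  -- BiHom-coassociativity: (Δ⊗ψ)∘Δ = (ω⊗Δ)∘Δ
  (∀ a, TensorProduct.assoc K A A A (TensorProduct.map Δ ψ (Δ a)) =
    TensorProduct.map ω Δ (Δ a)) ∧
  -- δ₁ is a BiHom-derivation
  (∀ a, TensorProduct.map α α (δ₁ a) = δ₁ (α a)) ∧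
  (∀ a, TensorProduct.map β β (δ₁ a) = δ₁ (β a)) ∧
  (∀ a, TensorProduct.map ψ ψ (δ₁ a) = δ₁ (ψ a)) ∧
  (∀ a, TensorProduct.map ω ω (δ₁ a) = δ₁ (ω a)) ∧
  (∀ a b, δ₁ (a * b) = lT2 β ω a (δ₁ b) + rT2 α ψ b (δ₁ a)) ∧
  -- δ₂ is a BiHom-derivation
  (∀ a, TensorProduct.map α α (δ₂ a) = δ₂ (α a)) ∧
  (∀ a, TensorProduct.map β β (δ₂ a) = δ₂ (β a)) ∧
  (∀ a, TensorProduct.map ψ ψ (δ₂ a) = δ₂ (ψ a)) ∧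
  (∀ a, TensorProduct.map ω ω (δ₂ a) = δ₂ (ω a)) ∧
  (∀ a b, δ₂ (a * b) = lT2 β ω a (δ₂ b) + rT2 α ψ b (δ₂ a)) ∧
  -- Δ is a covariant BiHom-derivation with respect to (δ₁, δ₂)
  (∀ a b, Δ (a * b) = rT2 α ψ b (Δ a) + lT2 β ω a (δ₁ b)) ∧
  (∀ a b, Δ (a * b) = lT2 β ω a (Δ b) + rT2 α ψ b (δ₂ a))

section TensorProductMap

variable {R M N M' N' : Type*} [CommRing R] [AddCommMonoid M] [AddCommMonoid N]
  [AddCommGroup M'] [AddCommGroup N'] [Module R M] [Module R N] [Module R M'] [Module R N']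

theorem map_sub_left (f g : M →ₗ[R] M') (h : N →ₗ[R] N') :
    map (f - g) h = map f h - map g h :=
  (mapBilinear (.id R) M N M' N').map_sub₂ f g h

theorem map_sub_right (f : M →ₗ[R] M') (g h : N →ₗ[R] N') :
    map f (g - h) = map f g - map f h :=
  (mapBilinear (.id R) M N M' N' f).map_sub g h

end TensorProductMap

section TensorProductInduction

variable {R M N M' N' : Type*} [CommSemiring R] [AddCommMonoid M] [AddCommMonoid N]
  [AddCommMonoid M'] [AddCommMonoid N'] [Module R M] [Module R N] [Module R M'] [Module R N']

@[elab_as_elim]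
theorem tmul_tmul_induction {motive : M ⊗[R] N → M' ⊗[R] N' → Prop}
    (zero_left : ∀ v, motive 0 v) (zero_right : ∀ u, motive u 0)
    (add_left : ∀ u₁ u₂ v, motive u₁ v → motive u₂ v → motive (u₁ + u₂) v)
    (add_right : ∀ u v₁ v₂, motive u v₁ → motive u v₂ → motive u (v₁ + v₂))
    (tmul : ∀ x y z w, motive (x ⊗ₜ y) (z ⊗ₜ w)) (u : M ⊗[R] N) (v : M' ⊗[R] N') :
    motive u v := by
  induction u with
  | zero => exact zero_left v
  | add u₁ u₂ h₁ h₂ => exact add_left u₁ u₂ v h₁ h₂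
  | tmul x y =>
    induction v with
    | zero => exact zero_right _
    | add v₁ v₂ h₁ h₂ => exact add_right _ v₁ v₂ h₁ h₂
    | tmul z w => exact tmul x y z w

end TensorProductInduction

section LinearEquiv

variable {R M : Type*} [Semiring R]

theorem symm_apply_comm [AddCommMonoid M] [Module R M] {e : M ≃ₗ[R] M} {f : M →ₗ[R] M}
    (h : ∀ a, e (f a) = f (e a)) (a : M) : e.symm (f a) = f (e.symm a) := by
  rw [e.symm_apply_eq, h, e.apply_symm_apply]

theorem symm_map_mul [NonUnitalNonAssocSemiring M] [Module R M] {e : M ≃ₗ[R] M}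
    (h : ∀ a b, e (a * b) = e a * e b) (a b : M) : e.symm (a * b) = e.symm a * e.symm b := by
  rw [e.symm_apply_eq, h, e.apply_symm_apply, e.apply_symm_apply]

end LinearEquiv

section BiHom

variable {K A : Type*} [Field K] [NonUnitalNonAssocRing A] [Module K A]

section LeftAction

variable [SMulCommClass K A A] {α β ψ ω f : A →ₗ[K] A} {Δ : A →ₗ[K] A ⊗[K] A}

theorem lT2_tmul (a x y : A) : lT2 β ω a (x ⊗ₜ[K] y) = (ω a * x) ⊗ₜ β y := rfl

theorem map_lT2 (hf : ∀ a b, f (a * b) = f a * f b) (hβf : ∀ a, β (f a) = f (β a))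
    (hωf : ∀ a, ω (f a) = f (ω a)) (a : A) (t : A ⊗[K] A) :
    map f f (lT2 β ω a t) = lT2 β ω (f a) (map f f t) := by
  induction t with
  | zero => simp only [map_zero]
  | add t₁ t₂ h₁ h₂ => simp only [map_add, h₁, h₂]
  | tmul x y => simp only [lT2_tmul, map_tmul, hf, hβf, hωf]

theorem lT2_lT2 (hassoc : ∀ a b c, α a * (b * c) = (a * b) * β c)
    (hω : ∀ a b, ω (a * b) = ω a * ω b) (hαω : ∀ a, α (ω a) = ω (α a)) (a b : A)
    (t : A ⊗[K] A) :
    lT2 β ω (α a) (lT2 β ω b t) = lT2 β ω (a * b) (map β β t) := by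
  induction t with
  | zero => simp only [map_zero]
  | add t₁ t₂ h₁ h₂ => simp only [map_add, h₁, h₂]
  | tmul x y => simp only [lT2_tmul, map_tmul, ← hαω, hassoc, hω]

theorem lT3_assoc (a : A) (t : (A ⊗[K] A) ⊗[K] A) :
    lT3 β ω a (TensorProduct.assoc K A A A t) =
      TensorProduct.assoc K A A A (map (lT2 β ω a) β t) :=
  map_map_assoc ..

theorem assoc_map_comul_lT2 (hΔ : ∀ a b, Δ (a * b) = lT2 β ω a (Δ b))
    (hβψ : ∀ a, β (ψ a) = ψ (β a)) (a : A) (t : A ⊗[K] A) :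
    TensorProduct.assoc K A A A (map Δ ψ (lT2 β ω a t)) =
      lT3 β ω (ω a) (TensorProduct.assoc K A A A (map Δ ψ t)) := by
  rw [lT3_assoc]
  induction t with
  | zero => simp only [map_zero]
  | add t₁ t₂ h₁ h₂ => simp only [map_add, h₁, h₂]
  | tmul x y => simp only [lT2_tmul, map_tmul, hΔ, hβψ]

theorem map_comul_lT2 (hΔ : ∀ a, map β β (Δ a) = Δ (β a))
    (hω : ∀ a b, ω (a * b) = ω a * ω b) (a : A) (t : A ⊗[K] A) :
    map ω Δ (lT2 β ω a t) = lT3 β ω (ω a) (map ω Δ t) := by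
  induction t with
  | zero => simp only [map_zero]
  | add t₁ t₂ h₁ h₂ => simp only [map_add, h₁, h₂]
  | tmul x y => simp only [lT2_tmul, lT3, map_tmul, hΔ, hω, LinearMap.mulLeft_apply]

end LeftAction

section RightAction

variable [IsScalarTower K A A] {α β ψ ω f : A →ₗ[K] A} {Δ : A →ₗ[K] A ⊗[K] A}

theorem rT2_tmul (a x y : A) : rT2 α ψ a (x ⊗ₜ[K] y) = α x ⊗ₜ (y * ψ a) := rfl

theorem map_rT2 (hf : ∀ a b, f (a * b) = f a * f b) (hαf : ∀ a, α (f a) = f (α a))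
    (hψf : ∀ a, ψ (f a) = f (ψ a)) (a : A) (t : A ⊗[K] A) :
    map f f (rT2 α ψ a t) = rT2 α ψ (f a) (map f f t) := by
  induction t with
  | zero => simp only [map_zero]
  | add t₁ t₂ h₁ h₂ => simp only [map_add, h₁, h₂]
  | tmul x y => simp only [rT2_tmul, map_tmul, hf, hαf, hψf]

theorem rT2_rT2 (hassoc : ∀ a b c, α a * (b * c) = (a * b) * β c)
    (hψ : ∀ a b, ψ (a * b) = ψ a * ψ b) (hβψ : ∀ a, β (ψ a) = ψ (β a)) (a b : A)
    (t : A ⊗[K] A) :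
    rT2 α ψ (β b) (rT2 α ψ a t) = rT2 α ψ (a * b) (map α α t) := by
  induction t with
  | zero => simp only [map_zero]
  | add t₁ t₂ h₁ h₂ => simp only [map_add, h₁, h₂]
  | tmul x y => simp only [rT2_tmul, map_tmul, ← hβψ, hassoc, hψ]

theorem rT3_assoc (a : A) (t : (A ⊗[K] A) ⊗[K] A) :
    rT3 α ψ a (TensorProduct.assoc K A A A t) =
      TensorProduct.assoc K A A A (map (map α α) (LinearMap.mulRight K (ψ a)) t) :=
  map_map_assoc ..

theorem assoc_map_comul_rT2 (hΔ : ∀ a, map α α (Δ a) = Δ (α a))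
    (hψ : ∀ a b, ψ (a * b) = ψ a * ψ b) (a : A) (t : A ⊗[K] A) :
    TensorProduct.assoc K A A A (map Δ ψ (rT2 α ψ a t)) =
      rT3 α ψ (ψ a) (TensorProduct.assoc K A A A (map Δ ψ t)) := by
  rw [rT3_assoc]
  induction t with
  | zero => simp only [map_zero]
  | add t₁ t₂ h₁ h₂ => simp only [map_add, h₁, h₂]
  | tmul x y => simp only [rT2_tmul, map_tmul, hΔ, hψ, LinearMap.mulRight_apply]

theorem rT3_tmul (a x : A) (t : A ⊗[K] A) :
    rT3 α ψ a (x ⊗ₜ[K] t) = α x ⊗ₜ rT2 α ψ a t := rfl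

theorem map_comul_rT2 (hΔ : ∀ a b, Δ (a * b) = rT2 α ψ b (Δ a))
    (hαω : ∀ a, α (ω a) = ω (α a)) (a : A) (t : A ⊗[K] A) :
    map ω Δ (rT2 α ψ a t) = rT3 α ψ (ψ a) (map ω Δ t) := by
  induction t with
  | zero => simp only [map_zero]
  | add t₁ t₂ h₁ h₂ => simp only [map_add, h₁, h₂]
  | tmul x y => simp only [rT2_tmul, rT3_tmul, map_tmul, hΔ, hαω]

end RightAction

variable [SMulCommClass K A A] [IsScalarTower K A A]

theorem lT2_rT2 {α β ψ ω : A →ₗ[K] A} (hα : ∀ a b, α (a * b) = α a * α b)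
    (hβ : ∀ a b, β (a * b) = β a * β b) (hαω : ∀ a, α (ω a) = ω (α a))
    (hβψ : ∀ a, β (ψ a) = ψ (β a)) (a b : A) (t : A ⊗[K] A) :
    lT2 β ω (α a) (rT2 α ψ b t) = rT2 α ψ (β b) (lT2 β ω a t) := by
  induction t with
  | zero => simp only [map_zero]
  | add t₁ t₂ h₁ h₂ => simp only [map_add, h₁, h₂]
  | tmul x y => simp only [lT2_tmul, rT2_tmul, hα, hβ, ← hαω, ← hβψ]

/-- The left half `a ↦ α⁻¹(a) ▷ r` of the inner map `a ↦ α⁻¹(a) ▷ r − s ◁ β⁻¹(a)`, bundled as a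
linear map in `r`. -/
noncomputable def leftInner (α β : A ≃ₗ[K] A) (ω : A →ₗ[K] A) :
    A ⊗[K] A →ₗ[K] A →ₗ[K] A ⊗[K] A :=
  (lT2hom β.toLinearMap ω ∘ₗ α.symm.toLinearMap).flip

/-- The right half `a ↦ s ◁ β⁻¹(a)` of the inner map `a ↦ α⁻¹(a) ▷ r − s ◁ β⁻¹(a)`, bundled as a
linear map in `s`. -/
noncomputable def rightInner (α β : A ≃ₗ[K] A) (ψ : A →ₗ[K] A) :
    A ⊗[K] A →ₗ[K] A →ₗ[K] A ⊗[K] A :=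
  (rT2hom α.toLinearMap ψ ∘ₗ β.symm.toLinearMap).flip

section Inner

variable {α β : A ≃ₗ[K] A} {ψ ω f : A →ₗ[K] A} {r s : A ⊗[K] A}

theorem leftInner_apply (r : A ⊗[K] A) (a : A) :
    leftInner α β ω r a = lT2 β.toLinearMap ω (α.symm a) r := rfl

theorem rightInner_apply (s : A ⊗[K] A) (a : A) :
    rightInner α β ψ s a = rT2 α.toLinearMap ψ (β.symm a) s := rfl

theorem deltaOp_eq_sub (r s : A ⊗[K] A) :
    deltaOp α β ψ ω r s = leftInner α β ω r - rightInner α β ψ s := rfl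

theorem deltaOp_apply (r s : A ⊗[K] A) (a : A) :
    deltaOp α β ψ ω r s a = leftInner α β ω r a - rightInner α β ψ s a := rfl

theorem map_leftInner (hf : ∀ a b, f (a * b) = f a * f b) (hαf : ∀ a, α (f a) = f (α a))
    (hβf : ∀ a, β (f a) = f (β a)) (hωf : ∀ a, ω (f a) = f (ω a)) (hr : map f f r = r) (a : A) :
    map f f (leftInner α β ω r a) = leftInner α β ω r (f a) := by
  rw [leftInner_apply, map_lT2 hf hβf hωf, hr, leftInner_apply, symm_apply_comm hαf]

theorem map_rightInner (hf : ∀ a b, f (a * b) = f a * f b) (hαf : ∀ a, α (f a) = f (α a))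
    (hβf : ∀ a, β (f a) = f (β a)) (hψf : ∀ a, ψ (f a) = f (ψ a)) (hs : map f f s = s) (a : A) :
    map f f (rightInner α β ψ s a) = rightInner α β ψ s (f a) := by
  rw [rightInner_apply, map_rT2 hf hαf hψf, hs, rightInner_apply, symm_apply_comm hβf]

theorem map_deltaOp (hf : ∀ a b, f (a * b) = f a * f b) (hαf : ∀ a, α (f a) = f (α a))
    (hβf : ∀ a, β (f a) = f (β a)) (hψf : ∀ a, ψ (f a) = f (ψ a)) (hωf : ∀ a, ω (f a) = f (ω a))
    (hr : map f f r = r) (hs : map f f s = s) (a : A) :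
    map f f (deltaOp α β ψ ω r s a) = deltaOp α β ψ ω r s (f a) := by
  rw [deltaOp_apply, map_sub, map_leftInner hf hαf hβf hωf hr, map_rightInner hf hαf hβf hψf hs,
    deltaOp_apply]

theorem leftInner_mul (hα : ∀ a b, α (a * b) = α a * α b)
    (hassoc : ∀ a b c, α a * (b * c) = (a * b) * β c) (hω : ∀ a b, ω (a * b) = ω a * ω b)
    (hαω : ∀ a, α (ω a) = ω (α a)) (hr : map β.toLinearMap β.toLinearMap r = r) (a b : A) :
    leftInner α β ω r (a * b) = lT2 β.toLinearMap ω a (leftInner α β ω r b) := by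
  have h := lT2_lT2 (α := α.toLinearMap) (β := β.toLinearMap) hassoc hω hαω
    (α.symm a) (α.symm b) r
  rw [hr, LinearEquiv.coe_coe, α.apply_symm_apply] at h
  rw [leftInner_apply, leftInner_apply, symm_map_mul hα, h]

theorem rightInner_mul (hβ : ∀ a b, β (a * b) = β a * β b)
    (hassoc : ∀ a b c, α a * (b * c) = (a * b) * β c) (hψ : ∀ a b, ψ (a * b) = ψ a * ψ b)
    (hβψ : ∀ a, β (ψ a) = ψ (β a)) (hs : map α.toLinearMap α.toLinearMap s = s) (a b : A) :
    rightInner α β ψ s (a * b) = rT2 α.toLinearMap ψ b (rightInner α β ψ s a) := by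
  have h := rT2_rT2 (α := α.toLinearMap) (β := β.toLinearMap) hassoc hψ hβψ
    (β.symm a) (β.symm b) s
  rw [hs, LinearEquiv.coe_coe, β.apply_symm_apply] at h
  rw [rightInner_apply, rightInner_apply, symm_map_mul hβ, h]

theorem lT2_rightInner (hα : ∀ a b, α (a * b) = α a * α b)
    (hβ : ∀ a b, β (a * b) = β a * β b) (hαω : ∀ a, α (ω a) = ω (α a))
    (hβψ : ∀ a, β (ψ a) = ψ (β a)) (u : A ⊗[K] A) (a b : A) :
    lT2 β.toLinearMap ω a (rightInner α β ψ u b) =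
      rT2 α.toLinearMap ψ b (leftInner α β ω u a) := by
  simpa only [leftInner_apply, rightInner_apply, LinearEquiv.coe_coe, α.apply_symm_apply,
      β.apply_symm_apply] using
    lT2_rT2 (α := α.toLinearMap) (β := β.toLinearMap) hα hβ hαω hβψ (α.symm a) (β.symm b) u

/-- Any middle element `u` may be inserted because `a ▷ (u ◁ β⁻¹(b))` and `(α⁻¹(a) ▷ u) ◁ b`
cancel: the choice `u = r = s` gives the derivation property, `u = r` and `u = s` the two
covariance conditions. -/
theorem deltaOp_mul (hα : ∀ a b, α (a * b) = α a * α b) (hβ : ∀ a b, β (a * b) = β a * β b)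
    (hassoc : ∀ a b c, α a * (b * c) = (a * b) * β c) (hψ : ∀ a b, ψ (a * b) = ψ a * ψ b)
    (hω : ∀ a b, ω (a * b) = ω a * ω b) (hαω : ∀ a, α (ω a) = ω (α a))
    (hβψ : ∀ a, β (ψ a) = ψ (β a)) (hr : map β.toLinearMap β.toLinearMap r = r)
    (hs : map α.toLinearMap α.toLinearMap s = s) (u : A ⊗[K] A) (a b : A) :
    deltaOp α β ψ ω r s (a * b) =
      lT2 β.toLinearMap ω a (deltaOp α β ψ ω r u b) +
        rT2 α.toLinearMap ψ b (deltaOp α β ψ ω u s a) := by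
  simp only [deltaOp_apply, map_sub, lT2_rightInner hα hβ hαω hβψ,
    leftInner_mul hα hassoc hω hαω hr, rightInner_mul hβ hassoc hψ hβψ hs, sub_add_sub_cancel]

end Inner

section LegProducts

variable {α β : A ≃ₗ[K] A} {ψ ω : A →ₗ[K] A} {r s : A ⊗[K] A}

theorem assoc_map_leftInner_eq_m1312 (hαψ : ∀ a, α (ψ a) = ψ (α a))
    (hr : map α.toLinearMap α.toLinearMap r = r) (s : A ⊗[K] A) :
    TensorProduct.assoc K A A A (map (leftInner α β ω s) ψ r) =
      m1312 α.toLinearMap β.toLinearMap ψ ω (r ⊗ₜ s) := by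
  suffices h : ∀ r s, TensorProduct.assoc K A A A
      (map (leftInner α β ω s) ψ (map α.toLinearMap α.toLinearMap r)) =
        m1312 α.toLinearMap β.toLinearMap ψ ω (r ⊗ₜ s) by
    simpa only [hr] using h r s
  apply tmul_tmul_induction
  case tmul => simp [leftInner_apply, lT2_tmul, m1312, hαψ]
  all_goals simp +contextual [map_add_left, add_tmul, tmul_add]

theorem assoc_map_rightInner_eq_m1223 (hβψ : ∀ a, β (ψ a) = ψ (β a))
    (hrβ : map β.toLinearMap β.toLinearMap r = r) (hrψ : map ψ ψ r = r) (s : A ⊗[K] A) :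
    TensorProduct.assoc K A A A (map (rightInner α β ψ s) ψ r) =
      m1223 α.toLinearMap β.toLinearMap (s ⊗ₜ r) := by
  suffices h : ∀ r s, TensorProduct.assoc K A A A
      (map (rightInner α β ψ s) ψ (map β.toLinearMap β.toLinearMap r)) =
        m1223 α.toLinearMap β.toLinearMap (s ⊗ₜ map ψ ψ r) by
    simpa only [hrβ, hrψ] using h r s
  apply tmul_tmul_induction
  case tmul => simp [rightInner_apply, rT2_tmul, m1223, hβψ]
  all_goals simp +contextual [map_add_left, add_tmul, tmul_add]

theorem map_leftInner_eq_m1223 (hαω : ∀ a, α (ω a) = ω (α a))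
    (hrα : map α.toLinearMap α.toLinearMap r = r) (hrω : map ω ω r = r) (s : A ⊗[K] A) :
    map ω (leftInner α β ω s) r = m1223 α.toLinearMap β.toLinearMap (r ⊗ₜ s) := by
  suffices h : ∀ r s, map ω (leftInner α β ω s) (map α.toLinearMap α.toLinearMap r) =
      m1223 α.toLinearMap β.toLinearMap (map ω ω r ⊗ₜ s) by
    simpa only [hrα, hrω] using h r s
  apply tmul_tmul_induction
  case tmul => simp [leftInner_apply, lT2_tmul, m1223, hαω]
  all_goals simp +contextual [map_add_right, add_tmul, tmul_add]

theorem map_rightInner_eq_m2313 (hβω : ∀ a, β (ω a) = ω (β a))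
    (hr : map β.toLinearMap β.toLinearMap r = r) (s : A ⊗[K] A) :
    map ω (rightInner α β ψ s) r = m2313 α.toLinearMap β.toLinearMap ψ ω (s ⊗ₜ r) := by
  suffices h : ∀ r s, map ω (rightInner α β ψ s) (map β.toLinearMap β.toLinearMap r) =
      m2313 α.toLinearMap β.toLinearMap ψ ω (s ⊗ₜ r) by
    simpa only [hr] using h r s
  apply tmul_tmul_induction
  case tmul => simp [rightInner_apply, rT2_tmul, m2313, hβω]
  all_goals simp +contextual [map_add_right, add_tmul, tmul_add]

theorem assoc_map_rightInner_leftInner (hα : ∀ a b, α (a * b) = α a * α b)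
    (hβ : ∀ a b, β (a * b) = β a * β b)
    (hassoc : ∀ a b c, α a * (b * c) = (a * b) * β c)
    (hψ : ∀ a b, ψ (a * b) = ψ a * ψ b) (hω : ∀ a b, ω (a * b) = ω a * ω b)
    (hαβ : ∀ a, α (β a) = β (α a)) (hαψ : ∀ a, α (ψ a) = ψ (α a))
    (hαω : ∀ a, α (ω a) = ω (α a)) (hβψ : ∀ a, β (ψ a) = ψ (β a))
    (hβω : ∀ a, β (ω a) = ω (β a)) (hψω : ∀ a, ψ (ω a) = ω (ψ a))
    (hrβ : map β.toLinearMap β.toLinearMap r = r) (hrψ : map ψ ψ r = r)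
    (hsα : map α.toLinearMap α.toLinearMap s = s) (hsω : map ω ω s = s) (a : A) :
    TensorProduct.assoc K A A A (map (rightInner α β ψ s) ψ (leftInner α β ω r a)) =
      map ω (leftInner α β ω r) (rightInner α β ψ s a) := by
  suffices h : ∀ r s, TensorProduct.assoc K A A A
      (map (rightInner α β ψ (map α.toLinearMap α.toLinearMap (map ω ω s))) ψ
        (leftInner α β ω (map β.toLinearMap β.toLinearMap r) a)) =
      map ω (leftInner α β ω (map β.toLinearMap β.toLinearMap (map ψ ψ r)))
        (rightInner α β ψ (map α.toLinearMap α.toLinearMap s) a) by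
    simpa only [hrβ, hrψ, hsα, hsω] using h r s
  apply tmul_tmul_induction
  case tmul =>
    intro x y z w
    have symm_comm : α.symm (β.symm a) = β.symm (α.symm a) :=
      symm_apply_comm (f := β.symm.toLinearMap)
        (fun b => (symm_apply_comm (f := α.toLinearMap) (fun c => (hαβ c).symm) b).symm) a
    have middle_leg : ω (α w) * (ψ (ω (β.symm (α.symm a))) * ψ x) =
        ω w * ω (ψ (α.symm (β.symm a))) * ψ (β x) := by
      rw [← hαω, hassoc, hβψ, hψω, symm_comm]
    simp [leftInner_apply, rightInner_apply, lT2_tmul, rT2_tmul, symm_map_mul hα, symm_map_mul hβ,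
      symm_apply_comm hαψ, symm_apply_comm hβω, hψ, hω, hαω, hβψ, middle_leg]
  all_goals simp +contextual [map_add_left, map_add_right]

end LegProducts

section Coassociativity

variable {α β : A ≃ₗ[K] A} {ψ ω : A →ₗ[K] A} {r s : A ⊗[K] A}

theorem assoc_map_deltaOp_sub_map_deltaOp (hα : ∀ a b, α (a * b) = α a * α b)
    (hβ : ∀ a b, β (a * b) = β a * β b)
    (hassoc : ∀ a b c, α a * (b * c) = (a * b) * β c)
    (hψ : ∀ a b, ψ (a * b) = ψ a * ψ b) (hω : ∀ a b, ω (a * b) = ω a * ω b)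
    (hαβ : ∀ a, α (β a) = β (α a)) (hαψ : ∀ a, α (ψ a) = ψ (α a))
    (hαω : ∀ a, α (ω a) = ω (α a)) (hβψ : ∀ a, β (ψ a) = ψ (β a))
    (hβω : ∀ a, β (ω a) = ω (β a)) (hψω : ∀ a, ψ (ω a) = ω (ψ a))
    (hrα : map α.toLinearMap α.toLinearMap r = r) (hrβ : map β.toLinearMap β.toLinearMap r = r)
    (hrψ : map ψ ψ r = r) (hrω : map ω ω r = r)
    (hsα : map α.toLinearMap α.toLinearMap s = s) (hsβ : map β.toLinearMap β.toLinearMap s = s)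
    (hsψ : map ψ ψ s = s) (hsω : map ω ω s = s) (a : A) :
    TensorProduct.assoc K A A A (map (deltaOp α β ψ ω r s) ψ (deltaOp α β ψ ω r s a)) -
        map ω (deltaOp α β ψ ω r s) (deltaOp α β ψ ω r s a) =
      lT3 β.toLinearMap ω (ω (α.symm a))
          (m1312 α.toLinearMap β.toLinearMap ψ ω (r ⊗ₜ r)
            - m1223 α.toLinearMap β.toLinearMap (r ⊗ₜ r)
            + m2313 α.toLinearMap β.toLinearMap ψ ω (s ⊗ₜ r)) -
        rT3 α.toLinearMap ψ (ψ (β.symm a))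
          (m1312 α.toLinearMap β.toLinearMap ψ ω (s ⊗ₜ r)
            - m1223 α.toLinearMap β.toLinearMap (s ⊗ₜ s)
            + m2313 α.toLinearMap β.toLinearMap ψ ω (s ⊗ₜ s)) := by
  have Δ_α := map_deltaOp (f := α.toLinearMap) hα (fun _ => rfl) (fun a => (hαβ a).symm)
    (fun a => (hαψ a).symm) (fun a => (hαω a).symm) hrα hsα
  have Δ_β := map_deltaOp (f := β.toLinearMap) hβ hαβ (fun _ => rfl)
    (fun a => (hβψ a).symm) (fun a => (hβω a).symm) hrβ hsβ
  have left_left : TensorProduct.assoc K A A A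
      (map (leftInner α β ω r) ψ (leftInner α β ω r a)) =
        lT3 β.toLinearMap ω (ω (α.symm a)) (m1312 α.toLinearMap β.toLinearMap ψ ω (r ⊗ₜ r)) := by
    rw [leftInner_apply, assoc_map_comul_lT2 (leftInner_mul hα hassoc hω hαω hrβ) hβψ,
      assoc_map_leftInner_eq_m1312 hαψ hrα]
  have right_right : map ω (rightInner α β ψ s) (rightInner α β ψ s a) =
      rT3 α.toLinearMap ψ (ψ (β.symm a)) (m2313 α.toLinearMap β.toLinearMap ψ ω (s ⊗ₜ s)) := by
    rw [rightInner_apply, map_comul_rT2 (rightInner_mul hβ hassoc hψ hβψ hsα) hαω,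
      map_rightInner_eq_m2313 hβω hsβ]
  have Δ_right : TensorProduct.assoc K A A A
      (map (deltaOp α β ψ ω r s) ψ (rightInner α β ψ s a)) =
        rT3 α.toLinearMap ψ (ψ (β.symm a)) (m1312 α.toLinearMap β.toLinearMap ψ ω (s ⊗ₜ r)
          - m1223 α.toLinearMap β.toLinearMap (s ⊗ₜ s)) := by
    rw [rightInner_apply, assoc_map_comul_rT2 Δ_α hψ, deltaOp_eq_sub, map_sub_left,
      LinearMap.sub_apply, map_sub, assoc_map_leftInner_eq_m1312 hαψ hsα,
      assoc_map_rightInner_eq_m1223 hβψ hsβ hsψ]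
  have Δ_left : map ω (deltaOp α β ψ ω r s) (leftInner α β ω r a) =
      lT3 β.toLinearMap ω (ω (α.symm a)) (m1223 α.toLinearMap β.toLinearMap (r ⊗ₜ r)
        - m2313 α.toLinearMap β.toLinearMap ψ ω (s ⊗ₜ r)) := by
    rw [leftInner_apply, map_comul_lT2 Δ_β hω, deltaOp_eq_sub, map_sub_right,
      LinearMap.sub_apply, map_leftInner_eq_m1223 hαω hrα hrω, map_rightInner_eq_m2313 hβω hrβ]
  have mixed := assoc_map_rightInner_leftInner hα hβ hassoc hψ hω hαβ hαψ hαω hβψ hβω hψω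
    hrβ hrψ hsα hsω a
  rw [deltaOp_apply, map_sub, map_sub, map_sub, Δ_left, Δ_right, deltaOp_eq_sub, map_sub_left,
    map_sub_right, LinearMap.sub_apply, LinearMap.sub_apply, map_sub, left_left, right_right, mixed]
  simp only [map_sub, map_add]
  abel

theorem isCovariantBiHomBialgebra_deltaOp_iff_coassoc (hα : ∀ a b, α (a * b) = α a * α b)
    (hβ : ∀ a b, β (a * b) = β a * β b)
    (hassoc : ∀ a b c, α a * (b * c) = (a * b) * β c)
    (hψ : ∀ a b, ψ (a * b) = ψ a * ψ b) (hω : ∀ a b, ω (a * b) = ω a * ω b)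
    (hαβ : ∀ a, α (β a) = β (α a)) (hαψ : ∀ a, α (ψ a) = ψ (α a))
    (hαω : ∀ a, α (ω a) = ω (α a)) (hβψ : ∀ a, β (ψ a) = ψ (β a))
    (hβω : ∀ a, β (ω a) = ω (β a)) (hψω : ∀ a, ψ (ω a) = ω (ψ a))
    (hrα : map α.toLinearMap α.toLinearMap r = r) (hrβ : map β.toLinearMap β.toLinearMap r = r)
    (hrψ : map ψ ψ r = r) (hrω : map ω ω r = r)
    (hsα : map α.toLinearMap α.toLinearMap s = s) (hsβ : map β.toLinearMap β.toLinearMap s = s)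
    (hsψ : map ψ ψ s = s) (hsω : map ω ω s = s) :
    IsCovariantBiHomBialgebra α.toLinearMap β.toLinearMap ψ ω
        (deltaOp α β ψ ω r r) (deltaOp α β ψ ω s s) (deltaOp α β ψ ω r s) ↔
      ∀ a, TensorProduct.assoc K A A A
          (map (deltaOp α β ψ ω r s) ψ (deltaOp α β ψ ω r s a)) =
        map ω (deltaOp α β ψ ω r s) (deltaOp α β ψ ω r s a) := by
  have compat_α {u v : A ⊗[K] A} := map_deltaOp (f := α.toLinearMap) (r := u) (s := v) hα
    (fun _ => rfl) (fun a => (hαβ a).symm) (fun a => (hαψ a).symm) (fun a => (hαω a).symm)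
  have compat_β {u v : A ⊗[K] A} := map_deltaOp (f := β.toLinearMap) (r := u) (s := v) hβ
    hαβ (fun _ => rfl) (fun a => (hβψ a).symm) (fun a => (hβω a).symm)
  have compat_ψ {u v : A ⊗[K] A} := map_deltaOp (f := ψ) (r := u) (s := v) hψ
    hαψ hβψ (fun _ => rfl) (fun a => (hψω a).symm)
  have compat_ω {u v : A ⊗[K] A} := map_deltaOp (f := ω) (r := u) (s := v) hω
    hαω hβω hψω (fun _ => rfl)
  have leibniz {u v : A ⊗[K] A} := deltaOp_mul (r := u) (s := v) hα hβ hassoc hψ hω hαω hβψ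
  exact ⟨fun ⟨_, _, _, _, coassoc, _⟩ => coassoc, fun coassoc =>
    ⟨compat_ψ hrψ hsψ, compat_ω hrω hsω, compat_α hrα hsα, compat_β hrβ hsβ, coassoc,
      compat_α hrα hrα, compat_β hrβ hrβ, compat_ψ hrψ hrψ, compat_ω hrω hrω, leibniz hrβ hrα r,
      compat_α hsα hsα, compat_β hsβ hsβ, compat_ψ hsψ hsψ, compat_ω hsω hsω, leibniz hsβ hsα s,
      fun a b => (leibniz hrβ hsα r a b).trans (add_comm _ _), leibniz hrβ hsα s⟩⟩

end Coassociativity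

end BiHom

/-- Proposition 2.24 / Proposition 2.11 of the paper: with the
data of Statement 11, `(A, μ, δ_r, δ_s, Δ, α, β, ψ, ω)` is a covariant
BiHom-bialgebra if and only if, for all `a ∈ A`,
`ωα⁻¹(a)▷(r₁₃r₁₂ − r₁₂r₂₃ + s₂₃r₁₃) = (s₁₃r₁₂ − s₁₂s₂₃ + s₂₃s₁₃)◁ψβ⁻¹(a)`. -/
theorem stmt12 {K A : Type*} [Field K] [NonUnitalNonAssocRing A] [Module K A]
    [SMulCommClass K A A] [IsScalarTower K A A]
    (α β : A ≃ₗ[K] A) (ψ ω : A →ₗ[K] A) (r s : A ⊗[K] A)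
    -- BiHom-associative algebra axioms for (A, ·, α, β)
    (hαmul : ∀ a b, α (a * b) = α a * α b)
    (hβmul : ∀ a b, β (a * b) = β a * β b)
    (hassoc : ∀ a b c, α a * (b * c) = (a * b) * β c)
    -- ψ, ω multiplicative
    (hψmul : ∀ a b, ψ (a * b) = ψ a * ψ b)
    (hωmul : ∀ a b, ω (a * b) = ω a * ω b)
    -- α, β, ψ, ω pairwise commute
    (hαβ : ∀ a, α (β a) = β (α a)) (hαψ : ∀ a, α (ψ a) = ψ (α a))
    (hαω : ∀ a, α (ω a) = ω (α a)) (hβψ : ∀ a, β (ψ a) = ψ (β a))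
    (hβω : ∀ a, β (ω a) = ω (β a)) (hψω : ∀ a, ψ (ω a) = ω (ψ a))
    -- r, s are α-, β-, ψ-, ω-invariant
    (hrα : TensorProduct.map α.toLinearMap α.toLinearMap r = r)
    (hrβ : TensorProduct.map β.toLinearMap β.toLinearMap r = r)
    (hrψ : TensorProduct.map ψ ψ r = r)
    (hrω : TensorProduct.map ω ω r = r)
    (hsα : TensorProduct.map α.toLinearMap α.toLinearMap s = s)
    (hsβ : TensorProduct.map β.toLinearMap β.toLinearMap s = s)
    (hsψ : TensorProduct.map ψ ψ s = s)
    (hsω : TensorProduct.map ω ω s = s) :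
    IsCovariantBiHomBialgebra α.toLinearMap β.toLinearMap ψ ω
      (deltaOp α β ψ ω r r) (deltaOp α β ψ ω s s) (deltaOp α β ψ ω r s) ↔
    (∀ a, lT3 β.toLinearMap ω (ω (α.symm a))
        (m1312 α.toLinearMap β.toLinearMap ψ ω (r ⊗ₜ[K] r)
          - m1223 α.toLinearMap β.toLinearMap (r ⊗ₜ[K] r)
          + m2313 α.toLinearMap β.toLinearMap ψ ω (s ⊗ₜ[K] r)) =
      rT3 α.toLinearMap ψ (ψ (β.symm a))
        (m1312 α.toLinearMap β.toLinearMap ψ ω (s ⊗ₜ[K] r)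
          - m1223 α.toLinearMap β.toLinearMap (s ⊗ₜ[K] s)
          + m2313 α.toLinearMap β.toLinearMap ψ ω (s ⊗ₜ[K] s))) := by
  rw [isCovariantBiHomBialgebra_deltaOp_iff_coassoc hαmul hβmul hassoc hψmul hωmul
    hαβ hαψ hαω hβψ hβω hψω hrα hrβ hrψ hrω hsα hsβ hsψ hsω]
  refine forall_congr' fun a => ?_
  rw [← sub_eq_zero, assoc_map_deltaOp_sub_map_deltaOp hαmul hβmul hassoc hψmul hωmul
    hαβ hαψ hαω hβψ hβω hψω hrα hrβ hrψ hrω hsα hsβ hsψ hsω, sub_eq_zero]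
end

section
/- Let (A, μ, α, β) be a unitary BiHom-associative algebra with α, β bijective, and let ψ, ω : A → A be linear maps with ψ(ab) = ψ(a)ψ(b), ω(ab) = ω(a)ω(b), ψ(1_A) = ω(1_A) = 1_A, such that any two of α, β, ψ, ω commute. Let r ∈ A⊗A be α-, β-, ψ-, and ω-invariant, set s = r − 1_A⊗1_A, and define δ_r(a) = α⁻¹(a)▷r − r◁β⁻¹(a), δ_s(a) = α⁻¹(a)▷s − s◁β⁻¹(a), Δ(a) = α⁻¹(a)▷r − s◁β⁻¹(a). Then (A, μ, δ_r, δ_s, Δ, α, β, ψ, ω) is a unitary quasitriangular covariant BiHom-bialgebra (i.e., a quasitriangular covariant BiHom-bialgebra with Δ(1_A) = 1_A⊗1_A) if and only if ω(r¹)⊗1_A⊗ψ(r²) = r₁₃r₁₂ − r₁₂r₂₃ + r₂₃r₁₃ (i.e., r satisfies the associative BiHom-Yang-Baxter equation of weight −1); equivalently, if and only if (ω⊗Δ)(r) = r₁₃r₁₂ and (Δ⊗ψ)(r) = −r₂₃r₁₃ + 1_A⊗r¹⊗r² + ω(r¹)⊗1_A⊗ψ(r²). -/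
open TensorProduct

/-- `r₁₃ = ω(r¹) ⊗ 1 ⊗ ψ(r²)` (unitary case, with unit `e`). -/
noncomputable def t13 {K A : Type*} [Field K] [NonUnitalNonAssocRing A] [Module K A]
    [SMulCommClass K A A] [IsScalarTower K A A] (ψ ω : A →ₗ[K] A) (e : A) :
    A ⊗[K] A →ₗ[K] A ⊗[K] (A ⊗[K] A) :=
  TensorProduct.map ω (TensorProduct.mk K A A e ∘ₗ ψ)

/-!
Since `Δ = deltaOp r s` is covariant, coassociativity of `Δ` at `a = αβ(b)` only has to be tested
on `r` and `s`: there `(ω⊗Δ)(u) = u₁₂r₂₃ − s₂₃u₁₃` and `(Δ⊗ψ)(u) = u₁₃r₁₂ − s₁₂u₂₃`, so the two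
Yang–Baxter equations of the pair say exactly that `(Δ⊗ψ)(u) = (ω⊗Δ)(u) − s₁₂r₂₃` for `u = r, s`.
The leftover terms in `s₁₂r₂₃` cancel against those produced by the derivations `δ_r` and `δ_s`,
because `(s ◁ x)₁₂r₂₃ = s₁₂(y ▷ r)₂₃` whenever `ψ(x) = ω(y)`.

For `s = r − 1⊗1`, the left-hand sides of both Yang–Baxter equations of the pair reduce to
`r₁₃r₁₂ − r₁₂r₂₃ + r₂₃r₁₃ − r₁₃`, so the pair condition is the single equation of weight `−1`.
Substituting `s = r − 1⊗1` in the formulas for `(ω⊗Δ)(r)` and `(Δ⊗ψ)(r)` turns each of the two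
identities for `Δ` into the same equation.
-/

namespace BiHom

section Invariance

variable {K M : Type*} [CommRing K] [AddCommGroup M] [Module K M]

/-- `F`-invariance of a tensor: `(F⊗F)(r) = r`. -/
def IsInvariant (F : M →ₗ[K] M) (r : M ⊗[K] M) : Prop :=
  TensorProduct.map F F r = r

/-- Simultaneous invariance of a tensor under the four structure maps of a covariant
BiHom-bialgebra, the standing assumption on the members of a Yang–Baxter pair. -/
structure IsStructureInvariant (α β ψ ω : M →ₗ[K] M) (r : M ⊗[K] M) : Prop where
  map_α : IsInvariant α r
  map_β : IsInvariant β r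
  map_ψ : IsInvariant ψ r
  map_ω : IsInvariant ω r

theorem IsInvariant.eq {F : M →ₗ[K] M} {r : M ⊗[K] M} (h : IsInvariant F r) :
    TensorProduct.map F F r = r := h

theorem IsInvariant.comp {F G : M →ₗ[K] M} {r : M ⊗[K] M} (hF : IsInvariant F r)
    (hG : IsInvariant G r) : IsInvariant (F ∘ₗ G) r := by
  rw [IsInvariant, TensorProduct.map_comp, LinearMap.comp_apply, hG, hF]

theorem IsInvariant.sub_tmul_self {F : M →ₗ[K] M} {r : M ⊗[K] M} {e : M}
    (hr : IsInvariant F r) (he : F e = e) : IsInvariant F (r - e ⊗ₜ[K] e) := by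
  rw [IsInvariant, map_sub, hr, TensorProduct.map_tmul, he]

end Invariance

variable {K A : Type*} [Field K] [NonUnitalNonAssocRing A] [Module K A]

/-- A BiHom-associative algebra `(A, μ, α, β)` together with the two further multiplicative maps
`ψ, ω` of a covariant BiHom-bialgebra, such that any two of the four maps commute. -/
structure IsBiHomAlgebra (α β ψ ω : A →ₗ[K] A) : Prop where
  α_mul : ∀ a b, α (a * b) = α a * α b
  β_mul : ∀ a b, β (a * b) = β a * β b
  ψ_mul : ∀ a b, ψ (a * b) = ψ a * ψ b
  ω_mul : ∀ a b, ω (a * b) = ω a * ω b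
  mul_assoc : ∀ a b c, α a * (b * c) = (a * b) * β c
  comm_αβ : Function.Commute α β
  comm_αψ : Function.Commute α ψ
  comm_αω : Function.Commute α ω
  comm_βψ : Function.Commute β ψ
  comm_βω : Function.Commute β ω
  comm_ψω : Function.Commute ψ ω

/-- A unit `e` of the BiHom-associative algebra `(A, μ, α, β)` which is moreover fixed by
`ψ` and `ω`. -/
structure IsBiHomUnit (α β ψ ω : A →ₗ[K] A) (e : A) : Prop where
  α_unit : α e = e
  β_unit : β e = e
  ψ_unit : ψ e = e
  ω_unit : ω e = e
  mul_unit : ∀ a, a * e = α a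
  unit_mul : ∀ a, e * a = β a

theorem IsStructureInvariant.sub_unit_tmul_unit {α β ψ ω : A →ₗ[K] A} {e : A} {r : A ⊗[K] A}
    (hr : IsStructureInvariant α β ψ ω r) (he : IsBiHomUnit α β ψ ω e) :
    IsStructureInvariant α β ψ ω (r - e ⊗ₜ[K] e) :=
  ⟨hr.map_α.sub_tmul_self he.α_unit, hr.map_β.sub_tmul_self he.β_unit,
    hr.map_ψ.sub_tmul_self he.ψ_unit, hr.map_ω.sub_tmul_self he.ω_unit⟩

section LeftAction

variable [SMulCommClass K A A] {α β ω F : A →ₗ[K] A}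

theorem lT2_tmul (β ω : A →ₗ[K] A) (a x y : A) :
    lT2 β ω a (x ⊗ₜ[K] y) = (ω a * x) ⊗ₜ[K] β y := rfl

theorem lT3_tmul (β ω : A →ₗ[K] A) (a x : A) (u : A ⊗[K] A) :
    lT3 β ω a (x ⊗ₜ[K] u) = (ω a * x) ⊗ₜ[K] TensorProduct.map β β u := rfl

theorem lT3_assoc_tmul (β ω : A →ₗ[K] A) (a x : A) (u : A ⊗[K] A) :
    lT3 β ω a (TensorProduct.assoc K A A A (u ⊗ₜ[K] x)) =
      TensorProduct.assoc K A A A (lT2 β ω a u ⊗ₜ[K] β x) := by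
  induction u with
  | zero => simp
  | add u v hu hv => simp only [map_add, add_tmul, hu, hv]
  | tmul y z => rfl

theorem map_lT2 (hF : ∀ a b, F (a * b) = F a * F b) (hβ : Function.Commute F β)
    (hω : Function.Commute F ω) (a : A) (u : A ⊗[K] A) :
    TensorProduct.map F F (lT2 β ω a u) = lT2 β ω (F a) (TensorProduct.map F F u) := by
  induction u with
  | zero => simp
  | add u v hu hv => simp only [map_add, hu, hv]
  | tmul x y => simp only [lT2_tmul, TensorProduct.map_tmul, hF, hβ.eq, hω.eq]

theorem lT2_lT2 (hassoc : ∀ a b c, α a * (b * c) = (a * b) * β c)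
    (hω : ∀ a b, ω (a * b) = ω a * ω b) (hαω : Function.Commute α ω) (a b : A)
    (u : A ⊗[K] A) :
    lT2 β ω (α a) (lT2 β ω b u) = lT2 β ω (a * b) (TensorProduct.map β β u) := by
  induction u with
  | zero => simp
  | add u v hu hv => simp only [map_add, hu, hv]
  | tmul x y => simp only [lT2_tmul, TensorProduct.map_tmul, hω, ← hαω.eq, hassoc]

theorem lT2_unit {e : A} (hω : ω e = e) (hmul : ∀ a, e * a = β a) :
    lT2 β ω e = TensorProduct.map β β := by
  ext x y
  simp [lT2_tmul, hω, hmul]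

theorem map_comul_lT2 {Δ : A →ₗ[K] A ⊗[K] A} (hω : ∀ a b, ω (a * b) = ω a * ω b)
    (hΔ : ∀ a, TensorProduct.map β β (Δ a) = Δ (β a)) (a : A) (u : A ⊗[K] A) :
    TensorProduct.map ω Δ (lT2 β ω a u) = lT3 β ω (ω a) (TensorProduct.map ω Δ u) := by
  induction u with
  | zero => simp
  | add u v hu hv => simp only [map_add, hu, hv]
  | tmul x y => simp only [lT2_tmul, lT3_tmul, TensorProduct.map_tmul, hω, hΔ]

end LeftAction

section RightAction

variable [IsScalarTower K A A] {α β ψ F : A →ₗ[K] A}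

theorem rT2_tmul (α ψ : A →ₗ[K] A) (a x y : A) :
    rT2 α ψ a (x ⊗ₜ[K] y) = α x ⊗ₜ[K] (y * ψ a) := rfl

theorem rT3_tmul (α ψ : A →ₗ[K] A) (a x : A) (u : A ⊗[K] A) :
    rT3 α ψ a (x ⊗ₜ[K] u) = α x ⊗ₜ[K] rT2 α ψ a u := rfl

theorem rT3_assoc_tmul (α ψ : A →ₗ[K] A) (a x : A) (u : A ⊗[K] A) :
    rT3 α ψ a (TensorProduct.assoc K A A A (u ⊗ₜ[K] x)) =
      TensorProduct.assoc K A A A (TensorProduct.map α α u ⊗ₜ[K] (x * ψ a)) := by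
  induction u with
  | zero => simp
  | add u v hu hv => simp only [map_add, add_tmul, hu, hv]
  | tmul y z => rfl

theorem map_rT2 (hF : ∀ a b, F (a * b) = F a * F b) (hα : Function.Commute F α)
    (hψ : Function.Commute F ψ) (a : A) (u : A ⊗[K] A) :
    TensorProduct.map F F (rT2 α ψ a u) = rT2 α ψ (F a) (TensorProduct.map F F u) := by
  induction u with
  | zero => simp
  | add u v hu hv => simp only [map_add, hu, hv]
  | tmul x y => simp only [rT2_tmul, TensorProduct.map_tmul, hF, hα.eq, hψ.eq]

theorem rT2_rT2 (hassoc : ∀ a b c, α a * (b * c) = (a * b) * β c)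
    (hψ : ∀ a b, ψ (a * b) = ψ a * ψ b) (hβψ : Function.Commute β ψ) (a b : A)
    (u : A ⊗[K] A) :
    rT2 α ψ (β b) (rT2 α ψ a u) = rT2 α ψ (a * b) (TensorProduct.map α α u) := by
  induction u with
  | zero => simp
  | add u v hu hv => simp only [map_add, hu, hv]
  | tmul x y => simp only [rT2_tmul, TensorProduct.map_tmul, hψ, ← hβψ.eq, hassoc]

theorem rT2_unit {e : A} (hψ : ψ e = e) (hmul : ∀ a, a * e = α a) :
    rT2 α ψ e = TensorProduct.map α α := by
  ext x y
  simp [rT2_tmul, hψ, hmul]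

theorem assoc_map_rT2 {Δ : A →ₗ[K] A ⊗[K] A} (hψ : ∀ a b, ψ (a * b) = ψ a * ψ b)
    (hΔ : ∀ a, TensorProduct.map α α (Δ a) = Δ (α a)) (a : A) (u : A ⊗[K] A) :
    TensorProduct.assoc K A A A (TensorProduct.map Δ ψ (rT2 α ψ a u)) =
      rT3 α ψ (ψ a) (TensorProduct.assoc K A A A (TensorProduct.map Δ ψ u)) := by
  induction u with
  | zero => simp
  | add u v hu hv => simp only [map_add, hu, hv]
  | tmul x y => simp only [rT2_tmul, rT3_assoc_tmul, TensorProduct.map_tmul, hψ, hΔ]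

end RightAction

variable [SMulCommClass K A A] [IsScalarTower K A A]

/-- An associative BiHom-Yang–Baxter pair of weight `(0, 0)`. -/
structure IsYangBaxterPair (α β ψ ω : A →ₗ[K] A) (r s : A ⊗[K] A) : Prop where
  fst_eq : m1312 α β ψ ω (r ⊗ₜ[K] r) - m1223 α β (r ⊗ₜ[K] r) + m2313 α β ψ ω (s ⊗ₜ[K] r) = 0
  snd_eq : m1312 α β ψ ω (s ⊗ₜ[K] r) - m1223 α β (s ⊗ₜ[K] s) + m2313 α β ψ ω (s ⊗ₜ[K] s) = 0

theorem lT2_rT2 {α β ψ ω : A →ₗ[K] A} (hα : ∀ a b, α (a * b) = α a * α b)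
    (hβ : ∀ a b, β (a * b) = β a * β b)
    (hαω : Function.Commute α ω) (hβψ : Function.Commute β ψ) (a b : A) (u : A ⊗[K] A) :
    lT2 β ω (α a) (rT2 α ψ b u) = rT2 α ψ (β b) (lT2 β ω a u) := by
  induction u with
  | zero => simp
  | add u v hu hv => simp only [map_add, hu, hv]
  | tmul x y => simp only [lT2_tmul, rT2_tmul, hα, hβ, ← hαω.eq, ← hβψ.eq]

section TripleProducts

variable {α β ψ ω : A →ₗ[K] A}

theorem m1223_tmul_left (α β : A →ₗ[K] A) (x y : A) (t : A ⊗[K] A) :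
    m1223 α β ((x ⊗ₜ[K] y) ⊗ₜ[K] t) = α x ⊗ₜ[K] lT2 β LinearMap.id y t := by
  induction t with
  | zero => simp
  | add u v hu hv => simp only [map_add, tmul_add, hu, hv]
  | tmul z w => rfl

theorem m1223_tmul_right (α β : A →ₗ[K] A) (x y : A) (t : A ⊗[K] A) :
    m1223 α β (t ⊗ₜ[K] (x ⊗ₜ[K] y)) =
      TensorProduct.assoc K A A A (rT2 α LinearMap.id x t ⊗ₜ[K] β y) := by
  induction t with
  | zero => simp
  | add u v hu hv => simp only [map_add, add_tmul, hu, hv]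
  | tmul z w => rfl

theorem m1312_tmul_left (α β ψ ω : A →ₗ[K] A) (x y : A) (t : A ⊗[K] A) :
    m1312 α β ψ ω ((x ⊗ₜ[K] y) ⊗ₜ[K] t) =
      TensorProduct.assoc K A A A (lT2 β ω x t ⊗ₜ[K] α (ψ y)) := by
  induction t with
  | zero => simp
  | add u v hu hv => simp only [map_add, tmul_add, add_tmul, hu, hv]
  | tmul z w => rfl

theorem m2313_tmul_right (α β ψ ω : A →ₗ[K] A) (x y : A) (t : A ⊗[K] A) :
    m2313 α β ψ ω (t ⊗ₜ[K] (x ⊗ₜ[K] y)) = β (ω x) ⊗ₜ[K] rT2 α ψ y t := by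
  induction t with
  | zero => simp
  | add u v hu hv => simp only [map_add, tmul_add, add_tmul, hu, hv]
  | tmul z w => rfl

theorem m1223_lT2_tmul_map (hα : ∀ a b, α (a * b) = α a * α b)
    (hβ : ∀ a b, β (a * b) = β a * β b) (hαω : Function.Commute α ω) (a : A)
    (u t : A ⊗[K] A) :
    m1223 α β (lT2 β ω a u ⊗ₜ[K] TensorProduct.map β β t) =
      lT3 β ω (α a) (m1223 α β (u ⊗ₜ[K] t)) := by
  induction u with
  | zero => simp
  | add u v hu hv => simp only [map_add, add_tmul, hu, hv]
  | tmul x y =>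
    rw [lT2_tmul, m1223_tmul_left, m1223_tmul_left, lT3_tmul,
      map_lT2 hβ (.refl β) .id_right, hα, hαω.eq]

theorem m1223_map_tmul_rT2 (hα : ∀ a b, α (a * b) = α a * α b)
    (hβ : ∀ a b, β (a * b) = β a * β b) (hβψ : Function.Commute β ψ) (a : A)
    (u t : A ⊗[K] A) :
    m1223 α β (TensorProduct.map α α u ⊗ₜ[K] rT2 α ψ a t) =
      rT3 α ψ (β a) (m1223 α β (u ⊗ₜ[K] t)) := by
  induction t with
  | zero => simp
  | add u v hu hv => simp only [map_add, tmul_add, hu, hv]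
  | tmul x y =>
    rw [rT2_tmul, m1223_tmul_right, m1223_tmul_right, rT3_assoc_tmul,
      map_rT2 hα (.refl α) .id_right, hβ, hβψ.eq]

theorem m1223_rT2_tmul_map (hassoc : ∀ a b c, α a * (b * c) = (a * b) * β c) {a b : A}
    (hab : ψ a = ω b) (u t : A ⊗[K] A) :
    m1223 α β (rT2 α ψ a u ⊗ₜ[K] TensorProduct.map β β t) =
      m1223 α β (TensorProduct.map α α u ⊗ₜ[K] lT2 β ω b t) := by
  induction u with
  | zero => simp
  | add u v hu hv => simp only [map_add, add_tmul, hu, hv]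
  | tmul x y =>
    have hy : lT2 β LinearMap.id (α y) (lT2 β ω b t) =
        lT2 β LinearMap.id (y * ω b) (TensorProduct.map β β t) :=
      lT2_lT2 hassoc (fun _ _ => rfl) .id_right y (ω b) t
    rw [rT2_tmul, TensorProduct.map_tmul, m1223_tmul_left, m1223_tmul_left, hy, hab]

theorem m1223_unit_left {e : A} (hα : α e = e) (hmul : ∀ a, e * a = β a) (u : A ⊗[K] A) :
    m1223 α β ((e ⊗ₜ[K] e) ⊗ₜ[K] u) = e ⊗ₜ[K] TensorProduct.map β β u := by
  rw [m1223_tmul_left, hα, lT2_unit rfl hmul]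

theorem m1223_unit_right {e : A} (hβ : β e = e) (hmul : ∀ a, a * e = α a) (u : A ⊗[K] A) :
    m1223 α β (u ⊗ₜ[K] (e ⊗ₜ[K] e)) =
      TensorProduct.assoc K A A A (TensorProduct.map α α u ⊗ₜ[K] e) := by
  rw [m1223_tmul_right, hβ, rT2_unit rfl hmul]

theorem m1312_unit_left {e : A} (hα : α e = e) (hψ : ψ e = e) (hω : ω e = e)
    (hmul : ∀ a, e * a = β a) (u : A ⊗[K] A) :
    m1312 α β ψ ω ((e ⊗ₜ[K] e) ⊗ₜ[K] u) =
      TensorProduct.assoc K A A A (TensorProduct.map β β u ⊗ₜ[K] e) := by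
  rw [m1312_tmul_left, hψ, hα, lT2_unit hω hmul]

theorem m2313_unit_left {e : A} (hα : α e = e) (hmul : ∀ a, e * a = β a)
    (hβψ : Function.Commute β ψ) (hβω : Function.Commute β ω) (u : A ⊗[K] A) :
    m2313 α β ψ ω ((e ⊗ₜ[K] e) ⊗ₜ[K] u) = t13 ψ ω e (TensorProduct.map β β u) := by
  induction u with
  | zero => simp
  | add u v hu hv => simp only [map_add, tmul_add, hu, hv]
  | tmul x y => simp [m2313_tmul_right, rT2_tmul, t13, hα, hmul, hβψ.eq, hβω.eq]

theorem m2313_unit_right {e : A} (hβ : β e = e) (hψ : ψ e = e) (hω : ω e = e)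
    (hmul : ∀ a, a * e = α a) (u : A ⊗[K] A) :
    m2313 α β ψ ω (u ⊗ₜ[K] (e ⊗ₜ[K] e)) = e ⊗ₜ[K] TensorProduct.map α α u := by
  rw [m2313_tmul_right, hω, hβ, rT2_unit hψ hmul]

end TripleProducts

section CovariantDerivations

variable {α β ψ ω : A →ₗ[K] A} {Δ δ : A →ₗ[K] A ⊗[K] A}

theorem assoc_map_lT2 (hβψ : Function.Commute β ψ)
    (hΔ : ∀ a b, Δ (a * b) = lT2 β ω a (Δ b) + rT2 α ψ b (δ a)) (a : A) (u : A ⊗[K] A) :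
    TensorProduct.assoc K A A A (TensorProduct.map Δ ψ (lT2 β ω a u)) =
      lT3 β ω (ω a) (TensorProduct.assoc K A A A (TensorProduct.map Δ ψ u)) +
        m1223 α β (δ (ω a) ⊗ₜ[K] TensorProduct.map ψ ψ u) := by
  induction u with
  | zero => simp
  | add u v hu hv => simp only [map_add, tmul_add, hu, hv]; abel
  | tmul x y =>
    simp only [lT2_tmul, TensorProduct.map_tmul, hΔ, add_tmul, map_add, lT3_assoc_tmul,
      m1223_tmul_right, hβψ.eq]
    rfl

theorem map_comul_rT2 (hαω : Function.Commute α ω)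
    (hΔ : ∀ a b, Δ (a * b) = lT2 β ω a (δ b) + rT2 α ψ b (Δ a)) (a : A) (u : A ⊗[K] A) :
    TensorProduct.map ω Δ (rT2 α ψ a u) =
      rT3 α ψ (ψ a) (TensorProduct.map ω Δ u) +
        m1223 α β (TensorProduct.map ω ω u ⊗ₜ[K] δ (ψ a)) := by
  induction u with
  | zero => simp
  | add u v hu hv => simp only [map_add, add_tmul, hu, hv]; abel
  | tmul x y =>
    simp only [rT2_tmul, rT3_tmul, TensorProduct.map_tmul, hΔ, tmul_add, m1223_tmul_left, hαω.eq]
    exact add_comm _ _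

end CovariantDerivations

section DeltaOp

variable {α β : A ≃ₗ[K] A} {ψ ω : A →ₗ[K] A} {r s u : A ⊗[K] A}

theorem deltaOp_map_map (hαβ : Function.Commute α β) (ψ ω : A →ₗ[K] A) (r s : A ⊗[K] A)
    (a : A) :
    deltaOp α β ψ ω r s (α (β a)) =
      lT2 β.toLinearMap ω (β a) r - rT2 α.toLinearMap ψ (α a) s := by
  change lT2 β.toLinearMap ω (α.symm (α (β a))) r -
    rT2 α.toLinearMap ψ (β.symm (α (β a))) s = _
  rw [α.symm_apply_apply, hαβ.eq, β.symm_apply_apply]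

theorem map_deltaOp {F : A →ₗ[K] A} (hF : ∀ a b, F (a * b) = F a * F b)
    (hαβ : Function.Commute α β) (hα : Function.Commute F α) (hβ : Function.Commute F β)
    (hψ : Function.Commute F ψ) (hω : Function.Commute F ω) (hr : IsInvariant F r)
    (hs : IsInvariant F s) (a : A) :
    TensorProduct.map F F (deltaOp α β ψ ω r s a) = deltaOp α β ψ ω r s (F a) := by
  obtain ⟨b, rfl⟩ : ∃ b, α (β b) = a := (α.surjective.comp β.surjective) a
  rw [hα.eq, hβ.eq, deltaOp_map_map hαβ, deltaOp_map_map hαβ, map_sub, map_lT2 hF hβ hω,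
    map_rT2 hF hα hψ, hr, hs, hα.eq, hβ.eq]

theorem deltaOp_mul (h : IsBiHomAlgebra α.toLinearMap β.toLinearMap ψ ω)
    (hr : IsInvariant β.toLinearMap r) (hs : IsInvariant α.toLinearMap s) (t : A ⊗[K] A)
    (a b : A) :
    deltaOp α β ψ ω r s (a * b) =
      lT2 β.toLinearMap ω a (deltaOp α β ψ ω r t b) +
        rT2 α.toLinearMap ψ b (deltaOp α β ψ ω t s a) := by
  obtain ⟨a, rfl⟩ : ∃ a', α (β a') = a := (α.surjective.comp β.surjective) a
  obtain ⟨b, rfl⟩ : ∃ b', α (β b') = b := (α.surjective.comp β.surjective) b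
  have hα : ∀ x y, α (x * y) = α x * α y := h.α_mul
  have hβ : ∀ x y, β (x * y) = β x * β y := h.β_mul
  have hαβ : Function.Commute α β := h.comm_αβ
  have hleft : lT2 β.toLinearMap ω (α (β a)) (lT2 β.toLinearMap ω (β b) r) =
      lT2 β.toLinearMap ω (β (a * b)) r := by
    rw [hβ]
    exact (lT2_lT2 h.mul_assoc h.ω_mul h.comm_αω _ _ r).trans (congrArg _ hr)
  have hright : rT2 α.toLinearMap ψ (α (β b)) (rT2 α.toLinearMap ψ (α a) s) =
      rT2 α.toLinearMap ψ (α (a * b)) s := by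
    rw [hα, hαβ.eq]
    exact (rT2_rT2 h.mul_assoc h.ψ_mul h.comm_βψ _ _ s).trans (congrArg _ hs)
  have hmid : lT2 β.toLinearMap ω (α (β a)) (rT2 α.toLinearMap ψ (α b) t) =
      rT2 α.toLinearMap ψ (α (β b)) (lT2 β.toLinearMap ω (β a) t) := by
    rw [hαβ.eq b]
    exact lT2_rT2 h.α_mul h.β_mul h.comm_αω h.comm_βψ _ _ t
  rw [← hα, ← hβ]
  simp only [deltaOp_map_map hαβ, map_sub, hleft, hright, hmid]
  abel

theorem map_ω_deltaOp (h : IsBiHomAlgebra α.toLinearMap β.toLinearMap ψ ω) (r s : A ⊗[K] A)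
    (hα : IsInvariant α.toLinearMap u) (hβ : IsInvariant β.toLinearMap u)
    (hω : IsInvariant ω u) :
    TensorProduct.map ω (deltaOp α β ψ ω r s) u =
      m1223 α.toLinearMap β.toLinearMap (u ⊗ₜ[K] r) -
        m2313 α.toLinearMap β.toLinearMap ψ ω (s ⊗ₜ[K] u) := by
  have hαβ : Function.Commute α β := h.comm_αβ
  have hαω : Function.Commute α ω := h.comm_αω
  have hβω : Function.Commute β ω := h.comm_βω
  have key (v : A ⊗[K] A) : TensorProduct.map ω (deltaOp α β ψ ω r s)
      (TensorProduct.map (α.toLinearMap ∘ₗ β.toLinearMap) (α.toLinearMap ∘ₗ β.toLinearMap) v) =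
        m1223 α.toLinearMap β.toLinearMap
          (TensorProduct.map (ω ∘ₗ β.toLinearMap) (ω ∘ₗ β.toLinearMap) v ⊗ₜ[K] r) -
        m2313 α.toLinearMap β.toLinearMap ψ ω
          (s ⊗ₜ[K] TensorProduct.map α.toLinearMap α.toLinearMap v) := by
    induction v with
    | zero => simp
    | add v w hv hw => simp only [map_add, add_tmul, tmul_add, hv, hw]; abel
    | tmul x y =>
      simp only [TensorProduct.map_tmul, LinearMap.comp_apply, LinearEquiv.coe_coe,
        deltaOp_map_map hαβ, tmul_sub, m1223_tmul_left, m2313_tmul_right]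
      simp only [hαω.eq, hβω.eq, hαβ.eq]
      rfl
  simpa only [(hα.comp hβ).eq, (hω.comp hβ).eq, hα.eq] using key u

theorem assoc_map_deltaOp_ψ (h : IsBiHomAlgebra α.toLinearMap β.toLinearMap ψ ω)
    (r s : A ⊗[K] A) (hα : IsInvariant α.toLinearMap u) (hβ : IsInvariant β.toLinearMap u)
    (hψ : IsInvariant ψ u) :
    TensorProduct.assoc K A A A (TensorProduct.map (deltaOp α β ψ ω r s) ψ u) =
      m1312 α.toLinearMap β.toLinearMap ψ ω (u ⊗ₜ[K] r) -
        m1223 α.toLinearMap β.toLinearMap (s ⊗ₜ[K] u) := by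
  have hαβ : Function.Commute α β := h.comm_αβ
  have hαψ : Function.Commute α ψ := h.comm_αψ
  have hβψ : Function.Commute β ψ := h.comm_βψ
  have key (v : A ⊗[K] A) : TensorProduct.assoc K A A A (TensorProduct.map (deltaOp α β ψ ω r s) ψ
      (TensorProduct.map (α.toLinearMap ∘ₗ β.toLinearMap) (α.toLinearMap ∘ₗ β.toLinearMap) v)) =
        m1312 α.toLinearMap β.toLinearMap ψ ω
          (TensorProduct.map β.toLinearMap β.toLinearMap v ⊗ₜ[K] r) -
        m1223 α.toLinearMap β.toLinearMap
          (s ⊗ₜ[K] TensorProduct.map (ψ ∘ₗ α.toLinearMap) (ψ ∘ₗ α.toLinearMap) v) := by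
    induction v with
    | zero => simp
    | add v w hv hw => simp only [map_add, add_tmul, tmul_add, hv, hw]; abel
    | tmul x y =>
      simp only [TensorProduct.map_tmul, LinearMap.comp_apply, LinearEquiv.coe_coe,
        deltaOp_map_map hαβ, sub_tmul, map_sub, m1312_tmul_left, m1223_tmul_right]
      simp only [hαψ.eq, hβψ.eq, hαβ.eq]
      rfl
  simpa only [(hα.comp hβ).eq, (hψ.comp hα).eq, hβ.eq] using key u

theorem m1223_deltaOp_add (h : IsBiHomAlgebra α.toLinearMap β.toLinearMap ψ ω)
    (hr : IsInvariant β.toLinearMap r) (hs : IsInvariant α.toLinearMap s) {a b : A}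
    (hab : ψ (α a) = ω (β b)) :
    m1223 α.toLinearMap β.toLinearMap (deltaOp α β ψ ω s s (α (β a)) ⊗ₜ[K] r) +
        m1223 α.toLinearMap β.toLinearMap (s ⊗ₜ[K] deltaOp α β ψ ω r r (α (β b))) =
      lT3 β.toLinearMap ω (α (β a)) (m1223 α.toLinearMap β.toLinearMap (s ⊗ₜ[K] r)) -
        rT3 α.toLinearMap ψ (α (β b)) (m1223 α.toLinearMap β.toLinearMap (s ⊗ₜ[K] r)) := by
  have hαβ : Function.Commute α β := h.comm_αβ
  have hleft := m1223_lT2_tmul_map h.α_mul h.β_mul h.comm_αω (β a) s r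
  have hright := m1223_map_tmul_rT2 h.α_mul h.β_mul h.comm_βψ (α b) s r
  have hmid := m1223_rT2_tmul_map (β := β.toLinearMap) h.mul_assoc hab s r
  rw [hr.eq] at hleft hmid
  rw [hs.eq] at hright hmid
  simp only [LinearEquiv.coe_coe, ← hαβ.eq b] at hleft hright
  simp only [deltaOp_map_map hαβ, sub_tmul, tmul_sub, map_sub, hleft, hmid, hright]
  abel

theorem IsYangBaxterPair.assoc_map_deltaOp_fst
    (hrs : IsYangBaxterPair α.toLinearMap β.toLinearMap ψ ω r s)
    (h : IsBiHomAlgebra α.toLinearMap β.toLinearMap ψ ω)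
    (hr : IsStructureInvariant α.toLinearMap β.toLinearMap ψ ω r) :
    TensorProduct.assoc K A A A (TensorProduct.map (deltaOp α β ψ ω r s) ψ r) =
      TensorProduct.map ω (deltaOp α β ψ ω r s) r -
        m1223 α.toLinearMap β.toLinearMap (s ⊗ₜ[K] r) := by
  rw [assoc_map_deltaOp_ψ h r s hr.map_α hr.map_β hr.map_ψ,
    map_ω_deltaOp h r s hr.map_α hr.map_β hr.map_ω, ← sub_eq_zero, ← hrs.fst_eq]
  abel

theorem IsYangBaxterPair.assoc_map_deltaOp_snd
    (hrs : IsYangBaxterPair α.toLinearMap β.toLinearMap ψ ω r s)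
    (h : IsBiHomAlgebra α.toLinearMap β.toLinearMap ψ ω)
    (hs : IsStructureInvariant α.toLinearMap β.toLinearMap ψ ω s) :
    TensorProduct.assoc K A A A (TensorProduct.map (deltaOp α β ψ ω r s) ψ s) =
      TensorProduct.map ω (deltaOp α β ψ ω r s) s -
        m1223 α.toLinearMap β.toLinearMap (s ⊗ₜ[K] r) := by
  rw [assoc_map_deltaOp_ψ h r s hs.map_α hs.map_β hs.map_ψ,
    map_ω_deltaOp h r s hs.map_α hs.map_β hs.map_ω, ← sub_eq_zero, ← hrs.snd_eq]
  abel

theorem IsYangBaxterPair.deltaOp_coassoc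
    (hrs : IsYangBaxterPair α.toLinearMap β.toLinearMap ψ ω r s)
    (h : IsBiHomAlgebra α.toLinearMap β.toLinearMap ψ ω)
    (hr : IsStructureInvariant α.toLinearMap β.toLinearMap ψ ω r)
    (hs : IsStructureInvariant α.toLinearMap β.toLinearMap ψ ω s) (a : A) :
    TensorProduct.assoc K A A A
        (TensorProduct.map (deltaOp α β ψ ω r s) ψ (deltaOp α β ψ ω r s a)) =
      TensorProduct.map ω (deltaOp α β ψ ω r s) (deltaOp α β ψ ω r s a) := by
  obtain ⟨b, rfl⟩ : ∃ b, α (β b) = a := (α.surjective.comp β.surjective) a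
  obtain ⟨c, rfl⟩ : ∃ c, α (β c) = b := (α.surjective.comp β.surjective) b
  have hαβ : Function.Commute α β := h.comm_αβ
  have hαψ : Function.Commute α ψ := h.comm_αψ
  have hαω : Function.Commute α ω := h.comm_αω
  have hβψ : Function.Commute β ψ := h.comm_βψ
  have hβω : Function.Commute β ω := h.comm_βω
  have hcomul := deltaOp_mul h hr.map_β hs.map_α
  have hα := map_deltaOp h.α_mul hαβ (.refl α) h.comm_αβ hαψ hαω hr.map_α hs.map_α
  have hβ := map_deltaOp h.β_mul hαβ hαβ.symm (.refl β) hβψ hβω hr.map_β hs.map_β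
  have hleibniz := m1223_deltaOp_add h hr.map_β hs.map_α (a := ω (β c)) (b := ψ (α c)) <| by
    rw [hαω.eq, h.comm_ψω.eq, hβψ.eq, hαβ.eq]
  rw [deltaOp_map_map hαβ]
  simp only [map_sub]
  rw [assoc_map_lT2 h.comm_βψ (hcomul s), map_comul_lT2 h.ω_mul hβ,
    assoc_map_rT2 h.ψ_mul hα, map_comul_rT2 h.comm_αω (hcomul r),
    hrs.assoc_map_deltaOp_fst h hr, hrs.assoc_map_deltaOp_snd h hs, hr.map_ψ.eq, hs.map_ω.eq]
  simp only [hβω.eq, hβψ.eq, hαω.eq, hαψ.eq, hαβ.eq] at hleibniz ⊢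
  simp only [map_sub]
  rw [← sub_eq_zero] at hleibniz ⊢
  rw [← hleibniz]
  abel

theorem IsYangBaxterPair.isCovariantBiHomBialgebra
    (hrs : IsYangBaxterPair α.toLinearMap β.toLinearMap ψ ω r s)
    (h : IsBiHomAlgebra α.toLinearMap β.toLinearMap ψ ω)
    (hr : IsStructureInvariant α.toLinearMap β.toLinearMap ψ ω r)
    (hs : IsStructureInvariant α.toLinearMap β.toLinearMap ψ ω s) :
    IsCovariantBiHomBialgebra α.toLinearMap β.toLinearMap ψ ω
      (deltaOp α β ψ ω r r) (deltaOp α β ψ ω s s) (deltaOp α β ψ ω r s) := by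
  have hα {p q} := map_deltaOp h.α_mul h.comm_αβ (.refl α) h.comm_αβ h.comm_αψ h.comm_αω
    (r := p) (s := q)
  have hβ {p q} := map_deltaOp h.β_mul h.comm_αβ h.comm_αβ.symm (.refl β) h.comm_βψ h.comm_βω
    (r := p) (s := q)
  have hψ {p q} := map_deltaOp h.ψ_mul h.comm_αβ h.comm_αψ.symm h.comm_βψ.symm (.refl ψ) h.comm_ψω
    (r := p) (s := q)
  have hω {p q} := map_deltaOp h.ω_mul h.comm_αβ h.comm_αω.symm h.comm_βω.symm h.comm_ψω.symm
    (.refl ω) (r := p) (s := q)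
  exact ⟨hψ hr.map_ψ hs.map_ψ, hω hr.map_ω hs.map_ω, hα hr.map_α hs.map_α,
    hβ hr.map_β hs.map_β, hrs.deltaOp_coassoc h hr hs,
    hα hr.map_α hr.map_α, hβ hr.map_β hr.map_β, hψ hr.map_ψ hr.map_ψ, hω hr.map_ω hr.map_ω,
    deltaOp_mul h hr.map_β hr.map_α r,
    hα hs.map_α hs.map_α, hβ hs.map_β hs.map_β, hψ hs.map_ψ hs.map_ψ, hω hs.map_ω hs.map_ω,
    deltaOp_mul h hs.map_β hs.map_α s,
    fun a b => (deltaOp_mul h hr.map_β hs.map_α r a b).trans (add_comm _ _),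
    deltaOp_mul h hr.map_β hs.map_α s⟩

end DeltaOp

section Unit

theorem yangBaxter_fst_sub_unit {α β ψ ω : A →ₗ[K] A} {e : A} {r : A ⊗[K] A}
    (h : IsBiHomAlgebra α β ψ ω) (he : IsBiHomUnit α β ψ ω e) (hr : IsInvariant β r) :
    m1312 α β ψ ω (r ⊗ₜ[K] r) - m1223 α β (r ⊗ₜ[K] r) +
        m2313 α β ψ ω ((r - e ⊗ₜ[K] e) ⊗ₜ[K] r) =
      m1312 α β ψ ω (r ⊗ₜ[K] r) - m1223 α β (r ⊗ₜ[K] r) + m2313 α β ψ ω (r ⊗ₜ[K] r) -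
        t13 ψ ω e r := by
  rw [sub_tmul, map_sub, m2313_unit_left he.α_unit he.unit_mul h.comm_βψ h.comm_βω, hr.eq,
    add_sub_assoc]

theorem yangBaxter_snd_sub_unit {α β ψ ω : A →ₗ[K] A} {e : A} {r : A ⊗[K] A}
    (h : IsBiHomAlgebra α β ψ ω) (he : IsBiHomUnit α β ψ ω e) (hα : IsInvariant α r)
    (hβ : IsInvariant β r) :
    m1312 α β ψ ω ((r - e ⊗ₜ[K] e) ⊗ₜ[K] r) -
        m1223 α β ((r - e ⊗ₜ[K] e) ⊗ₜ[K] (r - e ⊗ₜ[K] e)) +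
        m2313 α β ψ ω ((r - e ⊗ₜ[K] e) ⊗ₜ[K] (r - e ⊗ₜ[K] e)) =
      m1312 α β ψ ω (r ⊗ₜ[K] r) - m1223 α β (r ⊗ₜ[K] r) + m2313 α β ψ ω (r ⊗ₜ[K] r) -
        t13 ψ ω e r := by
  have h1312 := m1312_unit_left he.α_unit he.ψ_unit he.ω_unit he.unit_mul r
  have h1223_left := m1223_unit_left (β := β) he.α_unit he.unit_mul
  have h1223_right := m1223_unit_right (α := α) he.β_unit he.mul_unit r
  have h2313_left := m2313_unit_left he.α_unit he.unit_mul h.comm_βψ h.comm_βω r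
  have h2313_right := m2313_unit_right he.β_unit he.ψ_unit he.ω_unit he.mul_unit
  simp only [sub_tmul, tmul_sub, map_sub, h1312, h1223_left, h1223_right, h2313_left, h2313_right,
    hα.eq, hβ.eq, TensorProduct.map_tmul, he.α_unit, he.β_unit]
  abel

theorem isYangBaxterPair_sub_unit_iff {α β ψ ω : A →ₗ[K] A} {e : A} {r : A ⊗[K] A}
    (h : IsBiHomAlgebra α β ψ ω) (he : IsBiHomUnit α β ψ ω e) (hα : IsInvariant α r)
    (hβ : IsInvariant β r) :
    IsYangBaxterPair α β ψ ω r (r - e ⊗ₜ[K] e) ↔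
      t13 ψ ω e r =
        m1312 α β ψ ω (r ⊗ₜ[K] r) - m1223 α β (r ⊗ₜ[K] r) + m2313 α β ψ ω (r ⊗ₜ[K] r) := by
  refine ⟨fun hrs => ?_, fun hQ => ⟨?_, ?_⟩⟩
  · rw [eq_comm, ← sub_eq_zero, ← yangBaxter_fst_sub_unit h he hβ, hrs.fst_eq]
  · rw [yangBaxter_fst_sub_unit h he hβ, ← hQ, sub_self]
  · rw [yangBaxter_snd_sub_unit h he hα hβ, ← hQ, sub_self]

variable {α β : A ≃ₗ[K] A} {ψ ω : A →ₗ[K] A} {e : A} {r s : A ⊗[K] A}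

theorem deltaOp_unit (hαβ : Function.Commute α β)
    (he : IsBiHomUnit α.toLinearMap β.toLinearMap ψ ω e)
    (hr : IsInvariant β.toLinearMap r) (hs : IsInvariant α.toLinearMap s) :
    deltaOp α β ψ ω r s e = r - s := by
  have hα : α e = e := he.α_unit
  have hβ : β e = e := he.β_unit
  have hΔ := deltaOp_map_map hαβ ψ ω r s e
  rwa [hβ, hα, lT2_unit he.ω_unit he.unit_mul, rT2_unit he.ψ_unit he.mul_unit, hr, hs] at hΔ

theorem map_deltaOp_sub_unit_iff (h : IsBiHomAlgebra α.toLinearMap β.toLinearMap ψ ω)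
    (he : IsBiHomUnit α.toLinearMap β.toLinearMap ψ ω e)
    (hr : IsStructureInvariant α.toLinearMap β.toLinearMap ψ ω r) :
    (TensorProduct.map ω (deltaOp α β ψ ω r (r - e ⊗ₜ[K] e)) r =
        m1312 α.toLinearMap β.toLinearMap ψ ω (r ⊗ₜ[K] r) ∧
      TensorProduct.assoc K A A A
          (TensorProduct.map (deltaOp α β ψ ω r (r - e ⊗ₜ[K] e)) ψ r) =
        - m2313 α.toLinearMap β.toLinearMap ψ ω (r ⊗ₜ[K] r) + e ⊗ₜ[K] r + t13 ψ ω e r) ↔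
      t13 ψ ω e r =
        m1312 α.toLinearMap β.toLinearMap ψ ω (r ⊗ₜ[K] r) -
          m1223 α.toLinearMap β.toLinearMap (r ⊗ₜ[K] r) +
          m2313 α.toLinearMap β.toLinearMap ψ ω (r ⊗ₜ[K] r) := by
  rw [map_ω_deltaOp h _ _ hr.map_α hr.map_β hr.map_ω,
    assoc_map_deltaOp_ψ h _ _ hr.map_α hr.map_β hr.map_ψ, sub_tmul, map_sub, map_sub,
    m2313_unit_left he.α_unit he.unit_mul h.comm_βψ h.comm_βω,
    m1223_unit_left he.α_unit he.unit_mul, hr.map_β.eq]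
  constructor
  · rintro ⟨hω, -⟩
    rw [← hω]
    abel
  · intro hQ
    rw [hQ]
    constructor <;> abel

end Unit

end BiHom

/-- Proposition 2.28 / Proposition 2.17 of the paper: with the
data of Statement 11, `A` unitary with `ψ(1) = ω(1) = 1`, and `s = r − 1⊗1`, the
tuple `(A, μ, δ_r, δ_s, Δ, α, β, ψ, ω)` is a unitary quasitriangular covariant
BiHom-bialgebra iff `ω(r¹)⊗1⊗ψ(r²) = r₁₃r₁₂ − r₁₂r₂₃ + r₂₃r₁₃` (the abhYBe of
weight `−1`); equivalently, iff `(ω⊗Δ)(r) = r₁₃r₁₂` and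
`(Δ⊗ψ)(r) = −r₂₃r₁₃ + 1⊗r¹⊗r² + ω(r¹)⊗1⊗ψ(r²)`. -/
theorem stmt14 {K A : Type*} [Field K] [NonUnitalNonAssocRing A] [Module K A]
    [SMulCommClass K A A] [IsScalarTower K A A]
    (α β : A ≃ₗ[K] A) (ψ ω : A →ₗ[K] A) (e : A) (r s : A ⊗[K] A)
    (hs : s = r - e ⊗ₜ[K] e)
    -- BiHom-associative algebra axioms for (A, ·, α, β)
    (hαmul : ∀ a b, α (a * b) = α a * α b)
    (hβmul : ∀ a b, β (a * b) = β a * β b)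
    (hassoc : ∀ a b c, α a * (b * c) = (a * b) * β c)
    -- unit axioms, and ψ, ω fix the unit
    (hαe : α e = e) (hβe : β e = e) (hψe : ψ e = e) (hωe : ω e = e)
    (her : ∀ a, a * e = α a) (hel : ∀ a, e * a = β a)
    -- ψ, ω multiplicative
    (hψmul : ∀ a b, ψ (a * b) = ψ a * ψ b)
    (hωmul : ∀ a b, ω (a * b) = ω a * ω b)
    -- α, β, ψ, ω pairwise commute
    (hαβ : ∀ a, α (β a) = β (α a)) (hαψ : ∀ a, α (ψ a) = ψ (α a))
    (hαω : ∀ a, α (ω a) = ω (α a)) (hβψ : ∀ a, β (ψ a) = ψ (β a))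
    (hβω : ∀ a, β (ω a) = ω (β a)) (hψω : ∀ a, ψ (ω a) = ω (ψ a))
    -- r is α-, β-, ψ-, ω-invariant
    (hrα : TensorProduct.map α.toLinearMap α.toLinearMap r = r)
    (hrβ : TensorProduct.map β.toLinearMap β.toLinearMap r = r)
    (hrψ : TensorProduct.map ψ ψ r = r)
    (hrω : TensorProduct.map ω ω r = r) :
    -- P: (A, μ, δ_r, δ_s, Δ, α, β, ψ, ω) is a unitary quasitriangular covariant
    -- BiHom-bialgebra, i.e. (r, s) is an abhYBp of weight (0, 0) and Δ(1) = 1⊗1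
    (((m1312 α.toLinearMap β.toLinearMap ψ ω (r ⊗ₜ[K] r)
         - m1223 α.toLinearMap β.toLinearMap (r ⊗ₜ[K] r)
         + m2313 α.toLinearMap β.toLinearMap ψ ω (s ⊗ₜ[K] r) = 0) ∧
      (m1312 α.toLinearMap β.toLinearMap ψ ω (s ⊗ₜ[K] r)
         - m1223 α.toLinearMap β.toLinearMap (s ⊗ₜ[K] s)
         + m2313 α.toLinearMap β.toLinearMap ψ ω (s ⊗ₜ[K] s) = 0) ∧
      IsCovariantBiHomBialgebra α.toLinearMap β.toLinearMap ψ ω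
        (deltaOp α β ψ ω r r) (deltaOp α β ψ ω s s) (deltaOp α β ψ ω r s) ∧
      deltaOp α β ψ ω r s e = e ⊗ₜ[K] e)
    ↔
    -- Q: ω(r¹)⊗1⊗ψ(r²) = r₁₃r₁₂ − r₁₂r₂₃ + r₂₃r₁₃, the abhYBe of weight −1
    (t13 ψ ω e r =
      m1312 α.toLinearMap β.toLinearMap ψ ω (r ⊗ₜ[K] r)
        - m1223 α.toLinearMap β.toLinearMap (r ⊗ₜ[K] r)
        + m2313 α.toLinearMap β.toLinearMap ψ ω (r ⊗ₜ[K] r)))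
    ∧
    -- P ↔ R: (ω⊗Δ)(r) = r₁₃r₁₂ and
    -- (Δ⊗ψ)(r) = −r₂₃r₁₃ + 1⊗r¹⊗r² + ω(r¹)⊗1⊗ψ(r²)
    (((m1312 α.toLinearMap β.toLinearMap ψ ω (r ⊗ₜ[K] r)
         - m1223 α.toLinearMap β.toLinearMap (r ⊗ₜ[K] r)
         + m2313 α.toLinearMap β.toLinearMap ψ ω (s ⊗ₜ[K] r) = 0) ∧
      (m1312 α.toLinearMap β.toLinearMap ψ ω (s ⊗ₜ[K] r)
         - m1223 α.toLinearMap β.toLinearMap (s ⊗ₜ[K] s)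
         + m2313 α.toLinearMap β.toLinearMap ψ ω (s ⊗ₜ[K] s) = 0) ∧
      IsCovariantBiHomBialgebra α.toLinearMap β.toLinearMap ψ ω
        (deltaOp α β ψ ω r r) (deltaOp α β ψ ω s s) (deltaOp α β ψ ω r s) ∧
      deltaOp α β ψ ω r s e = e ⊗ₜ[K] e)
    ↔
    ((TensorProduct.map ω (deltaOp α β ψ ω r s) r =
        m1312 α.toLinearMap β.toLinearMap ψ ω (r ⊗ₜ[K] r)) ∧
     (TensorProduct.assoc K A A A (TensorProduct.map (deltaOp α β ψ ω r s) ψ r) =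
        - m2313 α.toLinearMap β.toLinearMap ψ ω (r ⊗ₜ[K] r)
          + e ⊗ₜ[K] r + t13 ψ ω e r))) := by
  subst hs
  have h : BiHom.IsBiHomAlgebra α.toLinearMap β.toLinearMap ψ ω :=
    ⟨hαmul, hβmul, hψmul, hωmul, hassoc, hαβ, hαψ, hαω, hβψ, hβω, hψω⟩
  have he : BiHom.IsBiHomUnit α.toLinearMap β.toLinearMap ψ ω e :=
    ⟨hαe, hβe, hψe, hωe, her, hel⟩
  have hr : BiHom.IsStructureInvariant α.toLinearMap β.toLinearMap ψ ω r :=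
    ⟨hrα, hrβ, hrψ, hrω⟩
  have hs := hr.sub_unit_tmul_unit he
  have hpair_iff := BiHom.isYangBaxterPair_sub_unit_iff h he hrα hrβ
  rw [BiHom.map_deltaOp_sub_unit_iff h he hr, and_self]
  refine ⟨fun ⟨hfst, hsnd, _⟩ => hpair_iff.1 ⟨hfst, hsnd⟩, fun hQ => ?_⟩
  have hrs := hpair_iff.2 hQ
  refine ⟨hrs.fst_eq, hrs.snd_eq, hrs.isCovariantBiHomBialgebra h hr hs, ?_⟩
  rw [BiHom.deltaOp_unit hαβ he hrβ hs.map_α, sub_sub_cancel]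
end
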